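/- Fix u ∈ ℂ and s ∈ ℚ with s ∉ ℤ. For q ∈ (0,1) set N_q = (q^{s/2}e^{πiu} − q^{−s/2}e^{−πiu})·∏_{n=1}^∞ (1 − q^{n+s}e^{2πiu})(1 − q^{n−s}e^{−2πiu}) and D_q = (q^{s/2} − q^{−s/2})·∏_{n=1}^∞ (1 − q^{n+s})(1 − q^{n−s}); these represent the theta values θ(u + sτ) and θ(sτ) for q = e^{2πiτ}. Then D_q ≠ 0 for all sufficiently small q > 0, and N_q/D_q → e^{2πi(⌊−s⌋ + 1/2)u} as q → 0⁺, where ⌊·⌋ denotes the floor function. -/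

import Mathlib

open Complex Filter

/-- The shifted theta value `θ(u + sτ)` for real `0 < q < 1` and shift `s` (with `q = e^{2πiτ}`,
`q^s` the positive real power):
`(q^{s/2}e^{πiu} − q^{−s/2}e^{−πiu})·∏_{n≥1}(1 − q^{n+s}e^{2πiu})(1 − q^{n−s}e^{−2πiu})`. -/
noncomputable def thetaShift (s : ℝ) (q : ℝ) (u : ℂ) : ℂ :=
  (((q ^ (s / 2) : ℝ) : ℂ) * Complex.exp (Real.pi * I * u) -
      ((q ^ (-s / 2) : ℝ) : ℂ) * Complex.exp (-(Real.pi * I * u))) *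
    ∏' n : ℕ, ((1 - ((q ^ (((n : ℝ) + 1) + s) : ℝ) : ℂ) * Complex.exp (2 * Real.pi * I * u)) *
      (1 - ((q ^ (((n : ℝ) + 1) - s) : ℝ) : ℂ) * Complex.exp (-(2 * Real.pi * I * u))))

/-- The `n`-th factor `(1 - q^(n+1+s) w) (1 - q^(n+1-s) v)` of the product defining a shifted
theta value. -/
noncomputable def thetaFactor (s q : ℝ) (w v : ℂ) (n : ℕ) : ℂ :=
  (1 - ((q ^ (((n : ℝ) + 1) + s) : ℝ) : ℂ) * w) * (1 - ((q ^ (((n : ℝ) + 1) - s) : ℝ) : ℂ) * v)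

lemma tendsto_ofReal_rpow_zero {a : ℝ} (ha : 0 < a) :
    Tendsto (fun q : ℝ => ((q ^ a : ℝ) : ℂ)) (nhdsWithin 0 (Set.Ioi 0)) (nhds 0) := by
  have h : Tendsto (fun q : ℝ => q ^ a) (nhdsWithin 0 (Set.Ioi 0)) (nhds 0) := by
    have h0 := (Real.continuousAt_rpow_const 0 a (Or.inr ha.le)).tendsto
    rw [Real.zero_rpow ha.ne'] at h0
    exact h0.mono_left nhdsWithin_le_nhds
  exact_mod_cast (continuous_ofReal.tendsto 0).comp h

lemma one_sub_ofReal_rpow_ne_zero {q a : ℝ} (hq : 0 < q) (hq1 : q < 1) (ha : a ≠ 0) :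
    (1 : ℂ) - ((q ^ a : ℝ) : ℂ) ≠ 0 := by
  intro h
  have h1 : q ^ a = 1 := by exact_mod_cast (sub_eq_zero.mp h).symm
  rcases ha.lt_or_gt with h2 | h2
  · exact (Real.one_lt_rpow_of_pos_of_lt_one_of_neg hq hq1 h2).ne' h1
  · exact (Real.rpow_lt_one hq.le hq1 h2).ne h1

lemma eventually_pos_and_lt {c : ℝ} (hc : 0 < c) :
    ∀ᶠ q : ℝ in nhdsWithin 0 (Set.Ioi 0), 0 < q ∧ q < c :=
  Ioo_mem_nhdsGT hc

lemma tendsto_one_sub_rpow_mul_div (w : ℂ) {a : ℝ} (ha : a ≠ 0) :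
    Tendsto (fun q : ℝ => (1 - ((q ^ a : ℝ) : ℂ) * w) / (1 - ((q ^ a : ℝ) : ℂ)))
      (nhdsWithin 0 (Set.Ioi 0)) (nhds (if 0 < a then 1 else w)) := by
  have h1 : Tendsto (fun _ : ℝ => (1 : ℂ)) (nhdsWithin 0 (Set.Ioi 0)) (nhds 1) :=
    tendsto_const_nhds
  split_ifs with h
  · have h0 := tendsto_ofReal_rpow_zero h
    have h2 := (h1.sub (h0.mul_const w)).div (h1.sub h0) (by simp)
    simp only [zero_mul, sub_zero, div_one] at h2
    exact h2
  · have h0 := tendsto_ofReal_rpow_zero (neg_pos.mpr (lt_of_le_of_ne (not_lt.mp h) ha))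
    have h2 := (h0.sub_const w).div (h0.sub h1) (by simp)
    simp only [zero_sub, neg_div_neg_eq, div_one] at h2
    refine h2.congr' ?_
    filter_upwards [eventually_pos_and_lt one_pos] with q hq
    have hne : ((q ^ a : ℝ) : ℂ) ≠ 0 := by exact_mod_cast (Real.rpow_pos_of_pos hq.1 a).ne'
    have e : ((q ^ (-a) : ℝ) : ℂ) = (((q ^ a : ℝ) : ℂ))⁻¹ := by
      rw [Real.rpow_neg hq.1.le, ofReal_inv]
    simp only [Pi.div_apply, e]
    rw [← mul_div_mul_left _ _ hne, mul_sub, mul_sub, mul_inv_cancel₀ hne, mul_one]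

lemma thetaFactor_one_ne_zero {s q : ℝ} (hs : ∀ m : ℤ, s ≠ m) (hq : 0 < q) (hq1 : q < 1)
    (n : ℕ) : thetaFactor s q 1 1 n ≠ 0 := by
  unfold thetaFactor
  rw [mul_one, mul_one]
  refine mul_ne_zero (one_sub_ofReal_rpow_ne_zero hq hq1 fun h => ?_)
    (one_sub_ofReal_rpow_ne_zero hq hq1 fun h => ?_)
  · exact hs (-(n + 1)) (by push_cast; linarith)
  · exact hs (n + 1) (by push_cast; linarith)

lemma tendsto_thetaFactor_div {s : ℝ} (hs : ∀ m : ℤ, s ≠ m) (w v : ℂ) (n : ℕ) :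
    Tendsto (fun q : ℝ => thetaFactor s q w v n / thetaFactor s q 1 1 n)
      (nhdsWithin 0 (Set.Ioi 0))
      (nhds ((if 0 < (n : ℝ) + 1 + s then 1 else w) * (if 0 < (n : ℝ) + 1 - s then 1 else v))) := by
  have h1 : (n : ℝ) + 1 + s ≠ 0 := fun h => hs (-(n + 1)) (by push_cast; linarith)
  have h2 : (n : ℝ) + 1 - s ≠ 0 := fun h => hs (n + 1) (by push_cast; linarith)
  refine ((tendsto_one_sub_rpow_mul_div w h1).mul (tendsto_one_sub_rpow_mul_div v h2)).congr
    fun q => ?_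
  simp only [thetaFactor, mul_one]
  rw [div_mul_div_comm]

lemma norm_thetaFactor_sub_one_le {s q : ℝ} (w v : ℂ) {K : ℕ} (hK : |s| ≤ K)
    (hq : 0 < q) (hq1 : q < 1 / 2) (n : ℕ) :
    ‖thetaFactor s q w v (n + K) - 1‖ ≤ (‖w‖ + ‖v‖ + ‖w‖ * ‖v‖) * (1 / 2) ^ n := by
  obtain ⟨hs1, hs2⟩ := abs_le.mp hK
  have key : ∀ a : ℝ, (n : ℝ) ≤ a → ‖((q ^ a : ℝ) : ℂ)‖ ≤ (1 / 2) ^ n := fun a ha => by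
    rw [norm_real, Real.norm_of_nonneg (Real.rpow_nonneg hq.le a)]
    refine (Real.rpow_le_rpow_of_exponent_ge hq (by linarith) ha).trans ?_
    rw [Real.rpow_natCast]
    gcongr
  have hx := key (((n + K : ℕ) : ℝ) + 1 + s) (by push_cast; linarith)
  have hy := key (((n + K : ℕ) : ℝ) + 1 - s) (by push_cast; linarith)
  unfold thetaFactor
  generalize ((q ^ (((n + K : ℕ) : ℝ) + 1 + s) : ℝ) : ℂ) = x at *
  generalize ((q ^ (((n + K : ℕ) : ℝ) + 1 - s) : ℝ) : ℂ) = y at *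
  have hy1 : ‖y‖ ≤ 1 := hy.trans (pow_le_one₀ (by norm_num) (by norm_num))
  calc ‖(1 - x * w) * (1 - y * v) - 1‖ = ‖-(x * w) + -(y * v) + x * y * (w * v)‖ := by
        congr 1; ring
    _ ≤ ‖x‖ * ‖w‖ + ‖y‖ * ‖v‖ + ‖x‖ * ‖y‖ * (‖w‖ * ‖v‖) := by
        refine (norm_add₃_le).trans ?_
        simp
    _ ≤ (1 / 2) ^ n * ‖w‖ + (1 / 2) ^ n * ‖v‖ + (1 / 2) ^ n * 1 * (‖w‖ * ‖v‖) := by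
        gcongr
    _ = _ := by ring

lemma summable_mul_half_pow (C : ℝ) : Summable fun n : ℕ => C * (1 / 2 : ℝ) ^ n :=
  summable_geometric_two.mul_left C

lemma multipliable_thetaFactor_add {s q : ℝ} (w v : ℂ) {K : ℕ} (hK : |s| ≤ K)
    (hq : 0 < q) (hq1 : q < 1 / 2) : Multipliable fun n => thetaFactor s q w v (n + K) := by
  have h := multipliable_one_add_of_summable
    ((summable_mul_half_pow _).of_nonneg_of_le (fun _ => norm_nonneg _)
      (norm_thetaFactor_sub_one_le w v hK hq hq1))
  simpa using h

lemma tendsto_tprod_thetaFactor_add {s : ℝ} (w v : ℂ) {K : ℕ} (hK : |s| ≤ K) :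
    Tendsto (fun q : ℝ => ∏' n, thetaFactor s q w v (n + K)) (nhdsWithin 0 (Set.Ioi 0))
      (nhds 1) := by
  obtain ⟨hs1, hs2⟩ := abs_le.mp hK
  have h := tendsto_tprod_one_add_of_dominated_convergence
    (𝓕 := nhdsWithin (0 : ℝ) (Set.Ioi 0)) (g := fun _ : ℕ => (0 : ℂ))
    (f := fun q n => thetaFactor s q w v (n + K) - 1)
    (summable_mul_half_pow (‖w‖ + ‖v‖ + ‖w‖ * ‖v‖)) (fun n => ?_) ?_
  · simpa using h
  · have hn : (0 : ℝ) ≤ n := n.cast_nonneg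
    have hx := tendsto_ofReal_rpow_zero (a := ((n + K : ℕ) : ℝ) + 1 + s)
      (by push_cast; linarith)
    have hy := tendsto_ofReal_rpow_zero (a := ((n + K : ℕ) : ℝ) + 1 - s)
      (by push_cast; linarith)
    simpa [thetaFactor] using
      (((hx.mul_const w).const_sub 1).mul ((hy.mul_const v).const_sub 1)).sub_const 1
  · filter_upwards [eventually_pos_and_lt (one_half_pos (α := ℝ))] with q hq
    exact norm_thetaFactor_sub_one_le w v hK hq.1 hq.2

lemma thetaShift_eq_mul_tprod {s q : ℝ} (u : ℂ) {K : ℕ} (hK : |s| ≤ K)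
    (hq : 0 < q) (hq1 : q < 1 / 2) :
    thetaShift s q u = -((q ^ (-s / 2) : ℝ) : ℂ) * (exp (-(Real.pi * I * u)) *
      (1 - ((q ^ s : ℝ) : ℂ) * exp (2 * Real.pi * I * u))) *
      (∏ n ∈ Finset.range K,
        thetaFactor s q (exp (2 * Real.pi * I * u)) (exp (-(2 * Real.pi * I * u))) n) *
      ∏' n, thetaFactor s q (exp (2 * Real.pi * I * u)) (exp (-(2 * Real.pi * I * u))) (n + K) := by
  rw [mul_assoc, (multipliable_thetaFactor_add _ _ hK hq hq1).prod_mul_tprod_nat_mul']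
  unfold thetaShift thetaFactor
  congr 1
  have e1 : ((q ^ (s / 2) : ℝ) : ℂ) = ((q ^ (-s / 2) : ℝ) : ℂ) * ((q ^ s : ℝ) : ℂ) := by
    rw [← ofReal_mul, ← Real.rpow_add hq]
    ring_nf
  have e2 : exp (Real.pi * I * u) = exp (-(Real.pi * I * u)) * exp (2 * Real.pi * I * u) := by
    rw [← Complex.exp_add]
    ring_nf
  rw [e1, e2]
  ring

lemma prod_range_ite_le (w : ℂ) {j K : ℕ} (h : j ≤ K) :
    ∏ n ∈ Finset.range K, (if j ≤ n then 1 else w) = w ^ j := by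
  rw [Finset.prod_ite, Finset.prod_const_one, one_mul, Finset.prod_const]
  congr 1
  have : (Finset.range K).filter (fun n => ¬ j ≤ n) = Finset.range j := by
    ext n
    simp only [Finset.mem_filter, Finset.mem_range]
    omega
  rw [this, Finset.card_range]

lemma prod_ite_eq_exp_floor {s : ℝ} (hs : ∀ m : ℤ, s ≠ m) {K : ℕ} (hK : |s| ≤ K) (u : ℂ) :
    exp (-(Real.pi * I * u)) * (if 0 < s then 1 else exp (2 * Real.pi * I * u)) *
      ∏ n ∈ Finset.range K, ((if 0 < (n : ℝ) + 1 + s then 1 else exp (2 * Real.pi * I * u)) *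
        (if 0 < (n : ℝ) + 1 - s then 1 else exp (-(2 * Real.pi * I * u)))) =
    exp (2 * Real.pi * I * (((⌊-s⌋ : ℤ) : ℂ) + 1 / 2) * u) := by
  obtain ⟨hs1, hs2⟩ := abs_le.mp hK
  have hf1 : (⌊-s⌋ : ℝ) ≤ -s := Int.floor_le _
  have hf2 : -s < ⌊-s⌋ + 1 := Int.lt_floor_add_one _
  generalize ⌊-s⌋ = m at *
  have hf3 : (m : ℝ) < -s := lt_of_le_of_ne hf1 fun h => hs (-m) (by push_cast; linarith)
  by_cases h : 0 < s
  · obtain ⟨j, hj⟩ : ∃ j : ℕ, m = -(j : ℤ) - 1 := by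
      have : m < 0 := by exact_mod_cast (by linarith : (m : ℝ) < 0)
      exact ⟨(-m - 1).toNat, by omega⟩
    subst hj
    push_cast at hf2 hf3
    have hjK : j ≤ K := by exact_mod_cast (by linarith : (j : ℝ) ≤ K)
    rw [if_pos h, mul_one]
    have hp : ∀ n ∈ Finset.range K,
        ((if 0 < (n : ℝ) + 1 + s then 1 else exp (2 * Real.pi * I * u)) *
        (if 0 < (n : ℝ) + 1 - s then 1 else exp (-(2 * Real.pi * I * u)))) =
        if j ≤ n then 1 else exp (-(2 * Real.pi * I * u)) := fun n _ => by
      rw [if_pos (by positivity), one_mul]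
      refine if_congr ⟨fun hn => ?_, fun hn => ?_⟩ rfl rfl
      · have : (j : ℝ) < n + 1 := by linarith
        exact Nat.lt_succ_iff.mp (by exact_mod_cast this)
      · have : (j : ℝ) ≤ n := by exact_mod_cast hn
        linarith
    rw [Finset.prod_congr rfl hp, prod_range_ite_le _ hjK, ← Complex.exp_nat_mul,
      ← Complex.exp_add]
    congr 1
    push_cast
    ring
  · have h0 : s < 0 := lt_of_le_of_ne (not_lt.mp h) (by simpa using hs 0)
    obtain ⟨j, rfl⟩ : ∃ j : ℕ, m = j := by
      have : -1 < m := by exact_mod_cast (by linarith : (-1 : ℝ) < m)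
      exact ⟨m.toNat, by omega⟩
    push_cast at hf2 hf3
    have hjK : j ≤ K := by exact_mod_cast (by linarith : (j : ℝ) ≤ K)
    rw [if_neg h]
    have hp : ∀ n ∈ Finset.range K,
        ((if 0 < (n : ℝ) + 1 + s then 1 else exp (2 * Real.pi * I * u)) *
        (if 0 < (n : ℝ) + 1 - s then 1 else exp (-(2 * Real.pi * I * u)))) =
        if j ≤ n then 1 else exp (2 * Real.pi * I * u) := fun n _ => by
      have hn0 : (0 : ℝ) ≤ n := n.cast_nonneg
      rw [if_pos (by linarith : 0 < (n : ℝ) + 1 - s), mul_one]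
      refine if_congr ⟨fun hn => ?_, fun hn => ?_⟩ rfl rfl
      · have : (j : ℝ) < n + 1 := by linarith
        exact Nat.lt_succ_iff.mp (by exact_mod_cast this)
      · have : (j : ℝ) ≤ n := by exact_mod_cast hn
        linarith
    rw [Finset.prod_congr rfl hp, prod_range_ite_le _ hjK, ← Complex.exp_nat_mul,
      ← Complex.exp_add, ← Complex.exp_add]
    congr 1
    push_cast
    ring

lemma eventually_thetaShift_zero_ne_zero {s : ℝ} (hs : ∀ m : ℤ, s ≠ m) :
    ∀ᶠ q in nhdsWithin (0 : ℝ) (Set.Ioi 0), thetaShift s q 0 ≠ 0 := by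
  obtain ⟨K, hK⟩ := exists_nat_ge |s|
  filter_upwards [eventually_pos_and_lt (one_half_pos (α := ℝ)),
    (tendsto_tprod_thetaFactor_add 1 1 hK).eventually_ne one_ne_zero] with q hq ht
  have hq1 : q < 1 := by linarith [hq.2]
  rw [thetaShift_eq_mul_tprod 0 hK hq.1 hq.2]
  simp only [mul_zero, neg_zero, Complex.exp_zero, mul_one, one_mul]
  refine mul_ne_zero (mul_ne_zero (mul_ne_zero ?_ ?_) ?_) ht
  · exact neg_ne_zero.mpr (by exact_mod_cast (Real.rpow_pos_of_pos hq.1 _).ne')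
  · exact one_sub_ofReal_rpow_ne_zero hq.1 hq1 (by simpa using hs 0)
  · exact Finset.prod_ne_zero_iff.mpr fun n _ => thetaFactor_one_ne_zero hs hq.1 hq1 n

lemma tendsto_thetaShift_div {s : ℝ} (hs : ∀ m : ℤ, s ≠ m) (u : ℂ) :
    Tendsto (fun q : ℝ => thetaShift s q u / thetaShift s q 0) (nhdsWithin (0 : ℝ) (Set.Ioi 0))
      (nhds (exp (2 * Real.pi * I * (((⌊-s⌋ : ℤ) : ℂ) + 1 / 2) * u))) := by
  obtain ⟨K, hK⟩ := exists_nat_ge |s|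
  have h1 := (tendsto_one_sub_rpow_mul_div (exp (2 * Real.pi * I * u))
    (a := s) (by simpa using hs 0)).const_mul (exp (-(Real.pi * I * u)))
  have h2 := tendsto_finsetProd (Finset.range K) fun n _ => tendsto_thetaFactor_div hs
    (exp (2 * Real.pi * I * u)) (exp (-(2 * Real.pi * I * u))) n
  have h3 := (tendsto_tprod_thetaFactor_add (exp (2 * Real.pi * I * u))
    (exp (-(2 * Real.pi * I * u))) hK).div (tendsto_tprod_thetaFactor_add 1 1 hK) one_ne_zero
  have h := (h1.mul h2).mul h3
  rw [prod_ite_eq_exp_floor hs hK u, div_one, mul_one] at h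
  refine h.congr' ?_
  filter_upwards [eventually_pos_and_lt (one_half_pos (α := ℝ))] with q hq
  have hne : -((q ^ (-s / 2) : ℝ) : ℂ) ≠ 0 :=
    neg_ne_zero.mpr (by exact_mod_cast (Real.rpow_pos_of_pos hq.1 _).ne')
  rw [thetaShift_eq_mul_tprod u hK hq.1 hq.2, thetaShift_eq_mul_tprod 0 hK hq.1 hq.2]
  simp only [mul_zero, neg_zero, Complex.exp_zero, mul_one, one_mul, Pi.div_apply,
    Finset.prod_div_distrib]
  rw [mul_div_mul_comm, mul_div_mul_comm, mul_div_mul_left _ _ hne, mul_div_assoc]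

/-- for fixed `u ∈ ℂ` and `s ∈ ℚ ∖ ℤ`, with `N_q = θ(u+sτ)` and `D_q = θ(sτ)`
(as above), `D_q ≠ 0` for all sufficiently small `q > 0`, and
`N_q/D_q → e^{2πi(⌊−s⌋+1/2)u}` as `q → 0⁺`. -/
theorem stmt17 (u : ℂ) (s : ℚ) (hs : ∀ m : ℤ, s ≠ (m : ℚ)) :
    (∀ᶠ q in nhdsWithin (0 : ℝ) (Set.Ioi 0), thetaShift (s : ℝ) q 0 ≠ 0) ∧
    Tendsto (fun q : ℝ => thetaShift (s : ℝ) q u / thetaShift (s : ℝ) q 0)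
      (nhdsWithin (0 : ℝ) (Set.Ioi 0))
      (nhds (Complex.exp (2 * Real.pi * I * (((⌊-s⌋ : ℤ) : ℂ) + 1 / 2) * u))) := by
  have hs' : ∀ m : ℤ, (s : ℝ) ≠ m := fun m h => hs m (by exact_mod_cast h)
  refine ⟨eventually_thetaShift_zero_ne_zero hs', ?_⟩
  have hfloor : ⌊-s⌋ = ⌊-(s : ℝ)⌋ := by
    rw [← Rat.cast_neg, Rat.floor_cast]
  rw [hfloor]
  exact tendsto_thetaShift_div hs' u
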